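/- arXiv:math/0703592 — 3 statements merged into one kernel-verified Lean document; each statement's English description precedes it below -/
import Mathlib

section
/- Let m ≥ 3 be odd, let P be a period-m orbit of f, and suppose f has no period-ℓ point for any odd ℓ with 1 < ℓ < m. Then P is a Štefan cycle of f, and f has periodic points of all even least periods as well as periodic points of every least period n > m. -/
/-- `x` is a periodic point of `f` with least period `m`. -/
def PeriodPt (f : ℝ → ℝ) (m : ℕ) (x : ℝ) : Prop :=
  f^[m] x = x ∧ ∀ i : ℕ, 0 < i → i < m → f^[i] x ≠ x

/-- For odd `m ≥ 3`, `P` is a Štefan cycle of `f` with least period `m`: there is `p ∈ P` with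
`f^m(p) = p` whose orbit is ordered as
`f^{m-2}(p) < ⋯ < f^3(p) < f(p) < p < f^2(p) < f^4(p) < ⋯ < f^{m-1}(p)`
or as its mirror image. -/
def IsStefanCycle (f : ℝ → ℝ) (m : ℕ) (P : Set ℝ) : Prop :=
  ∃ p ∈ P, f^[m] p = p ∧
    (((∀ i : ℕ, Odd i → i + 2 ≤ m - 2 → f^[i + 2] p < f^[i] p) ∧ f p < p ∧
        (∀ i : ℕ, Even i → i + 2 ≤ m - 1 → f^[i] p < f^[i + 2] p)) ∨
      ((∀ i : ℕ, Even i → i + 2 ≤ m - 1 → f^[i + 2] p < f^[i] p) ∧ p < f p ∧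
        (∀ i : ℕ, Odd i → i + 2 ≤ m - 2 → f^[i] p < f^[i + 2] p)))

/-!
Let `c` be the largest point of the cycle moved to the right and `d` its right neighbour in the
cycle; then `A = [c, d]` satisfies `A ⊆ f(A)`. The images `f^j(A)` increase and gain a point of the
cycle at every step until they contain the whole cycle. A point `q` of the cycle in `f^(m-3)(A)`
that is not mapped to the other side of the gap would produce a loop of length `m - 2` through `A`,
hence a point fixed by `f^(m-2)` but not by `f`. So all points in `f^(m-3)(A)` switch sides; since
sides cannot alternate along a cycle of odd length, `f^(m-3)(A)` misses part of the cycle. Counting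
then shows that every step up to then gains exactly one point, which is the Štefan ordering.

For the periods, the intervals spanned by `f^(k-1)(p)` and `f^(k+1)(p)` form a path of coverings
whose first vertex covers itself and whose last one covers every vertex of even index; loops of each
required length give the periodic points.

The mirror image of an argument is the same argument for the reversed order `αᵒᵈ`.
-/

open Set Function

/-! ### Forward orbits -/

section Orbit

variable {α : Type*} {f : α → α} {x y : α}

theorem minimalPeriod_eq_iff_iterate {n : ℕ} (hn : 0 < n) :
    minimalPeriod f x = n ↔ f^[n] x = x ∧ ∀ i, 0 < i → i < n → f^[i] x ≠ x := by
  constructor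
  · rintro rfl
    exact ⟨iterate_minimalPeriod, fun i hi hlt =>
      not_isPeriodicPt_of_pos_of_lt_minimalPeriod hi.ne' hlt⟩
  · rintro ⟨hper, hleast⟩
    have hper : IsPeriodicPt f n x := hper
    refine (hper.minimalPeriod_le hn).antisymm (not_lt.1 fun hlt => ?_)
    exact hleast _ (hper.minimalPeriod_pos hn) hlt iterate_minimalPeriod

theorem isFixedPt_of_isPeriodicPt_of_odd {n : ℕ} (hodd : Odd n) (hper : IsPeriodicPt f n x)
    (hno : ∀ ℓ, Odd ℓ → 1 < ℓ → ℓ ≤ n → minimalPeriod f x ≠ ℓ) : IsFixedPt f x := by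
  have hodd' : Odd (minimalPeriod f x) := hodd.of_dvd_nat hper.minimalPeriod_dvd
  refine minimalPeriod_eq_one_iff_isFixedPt.1 (not_not.1 fun hne => ?_)
  exact hno _ hodd' (by grind) (hper.minimalPeriod_le hodd.pos) rfl

/-- The forward orbit of `x` under `f`, as a set; for a periodic point this is its cycle. -/
def forwardOrbit (f : α → α) (x : α) : Set α := range fun i => f^[i] x

theorem iterate_mem_forwardOrbit (f : α → α) (x : α) (i : ℕ) : f^[i] x ∈ forwardOrbit f x :=
  mem_range_self i

theorem self_mem_forwardOrbit (f : α → α) (x : α) : x ∈ forwardOrbit f x :=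
  iterate_mem_forwardOrbit f x 0

theorem mapsTo_forwardOrbit (f : α → α) (x : α) :
    MapsTo f (forwardOrbit f x) (forwardOrbit f x) := by
  rintro _ ⟨i, rfl⟩
  exact ⟨i + 1, iterate_succ_apply' f i x⟩

theorem forwardOrbit_subset {B : Set α} (hB : MapsTo f B B) (hx : x ∈ B) : forwardOrbit f x ⊆ B :=
  range_subset_iff.2 fun i => hB.iterate i hx

theorem forwardOrbit_eq_image (hx : x ∈ periodicPts f) :
    forwardOrbit f x = (fun i => f^[i] x) '' Iio (minimalPeriod f x) := by
  refine (range_subset_iff.2 fun i => ?_).antisymm (image_subset_range _ _)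
  exact ⟨i % minimalPeriod f x, Nat.mod_lt _ (minimalPeriod_pos_of_mem_periodicPts hx),
    iterate_mod_minimalPeriod_eq⟩

theorem finite_forwardOrbit (hx : x ∈ periodicPts f) : (forwardOrbit f x).Finite :=
  forwardOrbit_eq_image hx ▸ (finite_Iio _).image _

theorem ncard_forwardOrbit (hx : x ∈ periodicPts f) :
    (forwardOrbit f x).ncard = minimalPeriod f x := by
  rw [forwardOrbit_eq_image hx, iterate_injOn_Iio_minimalPeriod.ncard_image,
    ncard_Iio_nat]

theorem minimalPeriod_of_mem_forwardOrbit (hx : x ∈ periodicPts f) (hy : y ∈ forwardOrbit f x) :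
    minimalPeriod f y = minimalPeriod f x := by
  obtain ⟨i, rfl⟩ := hy
  exact minimalPeriod_apply_iterate hx i

theorem mem_periodicPts_of_mem_forwardOrbit (hx : x ∈ periodicPts f) (hy : y ∈ forwardOrbit f x) :
    y ∈ periodicPts f := by
  rw [← minimalPeriod_pos_iff_mem_periodicPts, minimalPeriod_of_mem_forwardOrbit hx hy]
  exact minimalPeriod_pos_of_mem_periodicPts hx

theorem forwardOrbit_eq_of_mem (hx : x ∈ periodicPts f) (hy : y ∈ forwardOrbit f x) :
    forwardOrbit f y = forwardOrbit f x := by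
  refine eq_of_subset_of_ncard_le (forwardOrbit_subset (mapsTo_forwardOrbit f x) hy) ?_
    (finite_forwardOrbit hx)
  rw [ncard_forwardOrbit hx, ncard_forwardOrbit (mem_periodicPts_of_mem_forwardOrbit hx hy),
    minimalPeriod_of_mem_forwardOrbit hx hy]

end Orbit

/-! ### Images of an expanding set -/

section ExpandingSet

variable {α : Type*} {f : α → α} {A : Set α} {x : α} {n : ℕ}

theorem monotone_image_iterate (hA : SurjOn f A A) : Monotone fun j => f^[j] '' A := by
  simp only [image_iterate_eq]
  exact Monotone.monotone_iterate_of_le_map (fun _ _ h => image_mono h) hA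

theorem iterate_mem_image_iterate (hA : SurjOn f A A) (hx : x ∈ A) (hfx : f x ∈ A) {i j : ℕ}
    (hij : i ≤ j + 1) : f^[i] x ∈ f^[j] '' A := by
  cases i with
  | zero => exact monotone_image_iterate hA (Nat.zero_le j) (by simpa using hx)
  | succ i => exact monotone_image_iterate hA (Nat.le_of_succ_le_succ hij) ⟨f x, hfx, rfl⟩

/- If one step adds no orbit point, then the orbit points present form an invariant set, hence are
the whole cycle. -/
theorem forwardOrbit_inter_image_iterate_ssubset (hA : SurjOn f A A)
    (hne : (forwardOrbit f x ∩ A).Nonempty) (hx : x ∈ periodicPts f)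
    (hn : ¬ forwardOrbit f x ⊆ f^[n] '' A) {j : ℕ} (hj : j ≤ n) :
    forwardOrbit f x ∩ f^[j] '' A ⊂ forwardOrbit f x ∩ f^[j + 1] '' A := by
  have hmono := monotone_image_iterate hA
  refine ssubset_of_subset_not_subset (inter_subset_inter_right _ (hmono j.le_succ)) fun hsub => ?_
  have hinv : MapsTo f (forwardOrbit f x ∩ f^[j] '' A) (forwardOrbit f x ∩ f^[j] '' A) := by
    rintro _ ⟨hy, z, hz, rfl⟩
    exact hsub ⟨mapsTo_forwardOrbit f x hy, z, hz, iterate_succ_apply' f j z⟩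
  obtain ⟨y, hyx, hyA⟩ := hne
  have hyj : y ∈ f^[j] '' A := hmono j.zero_le (by simpa using hyA)
  apply hn
  calc forwardOrbit f x = forwardOrbit f y := (forwardOrbit_eq_of_mem hx hyx).symm
    _ ⊆ forwardOrbit f x ∩ f^[j] '' A := forwardOrbit_subset hinv ⟨hyx, hyj⟩
    _ ⊆ f^[j] '' A := inter_subset_right
    _ ⊆ f^[n] '' A := hmono hj

theorem ncard_forwardOrbit_inter_image_iterate_add_le (hA : SurjOn f A A)
    (hne : (forwardOrbit f x ∩ A).Nonempty) (hx : x ∈ periodicPts f)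
    (hn : ¬ forwardOrbit f x ⊆ f^[n] '' A) {j k : ℕ} (hjk : j + k = n + 1) :
    (forwardOrbit f x ∩ f^[j] '' A).ncard + k ≤ minimalPeriod f x := by
  induction k generalizing j with
  | zero =>
    rw [← ncard_forwardOrbit hx]
    exact ncard_le_ncard inter_subset_left (finite_forwardOrbit hx)
  | succ k ih =>
    have hlt := ncard_lt_ncard (forwardOrbit_inter_image_iterate_ssubset hA hne hx hn
      (j := j) (by omega)) ((finite_forwardOrbit hx).inter_of_left _)
    have := ih (j := j + 1) (by omega)
    omega

theorem iterate_add_two_notMem_image_iterate (hA : SurjOn f A A) (hx : x ∈ A) (hfx : f x ∈ A)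
    (hper : minimalPeriod f x = n + 3) (hn : ¬ forwardOrbit f x ⊆ f^[n] '' A) {j : ℕ}
    (hj : j + 2 < n + 3) : f^[j + 2] x ∉ f^[j] '' A := by
  intro hmem
  have hxper : x ∈ periodicPts f := minimalPeriod_pos_iff_mem_periodicPts.1 (by omega)
  have hsub : (fun i => f^[i] x) '' Iio (j + 3) ⊆ forwardOrbit f x ∩ f^[j] '' A := by
    rintro _ ⟨i, hi, rfl⟩
    refine ⟨iterate_mem_forwardOrbit f x i, ?_⟩
    obtain rfl | hi : i = j + 2 ∨ i ≤ j + 1 := by grind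
    · exact hmem
    · exact iterate_mem_image_iterate hA hx hfx hi
  have hinj : InjOn (fun i => f^[i] x) (Iio (j + 3)) :=
    iterate_injOn_Iio_minimalPeriod.mono (Iio_subset_Iio (by omega))
  have hlow := ncard_le_ncard hsub ((finite_forwardOrbit hxper).inter_of_left _)
  rw [hinj.ncard_image, ncard_Iio_nat] at hlow
  have hupp := ncard_forwardOrbit_inter_image_iterate_add_le hA
    ⟨x, self_mem_forwardOrbit f x, hx⟩ hxper hn (j := j) (k := n + 1 - j) (by omega)
  omega

end ExpandingSet

/-! ### Itineraries -/

section Covering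

theorem isCompact_Icc_inter_fiber {α β : Type*} [Preorder α] [TopologicalSpace α]
    [OrderClosedTopology α] [CompactIccSpace α] [TopologicalSpace β] [T1Space β] {g : α → β}
    {p q : α} (hg : ContinuousOn g (Icc p q)) (b : β) : IsCompact (Icc p q ∩ g ⁻¹' {b}) :=
  isCompact_Icc.of_isClosed_subset
    (hg.preimage_isClosed_of_isClosed isClosed_Icc isClosed_singleton) inter_subset_left

variable {α : Type*} [ConditionallyCompleteLinearOrder α] [TopologicalSpace α] [OrderTopology α]
  [DenselyOrdered α]

theorem exists_mapsTo_uIcc_of_mem_image {β : Type*} [LinearOrder β] [TopologicalSpace β]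
    [OrderClosedTopology β] {g : α → β} {I : Set α} (hI : I.OrdConnected) (hg : ContinuousOn g I)
    {a b : β} (ha : a ∈ g '' I) (hb : b ∈ g '' I) :
    ∃ u ∈ I, ∃ v ∈ I, g u = a ∧ g v = b ∧ MapsTo g (uIcc u v) (uIcc a b) := by
  obtain ⟨p, hp, rfl⟩ := ha
  obtain ⟨q, hq, rfl⟩ := hb
  wlog hpq : p ≤ q generalizing p q
  · obtain ⟨v, hv, u, hu, hgv, hgu, hmaps⟩ := this q hq p hp (le_of_not_ge hpq)
    exact ⟨u, hu, v, hv, hgu, hgv, by rwa [uIcc_comm u, uIcc_comm (g p)]⟩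
  replace hg : ContinuousOn g (Icc p q) := hg.mono (hI.out hp hq)
  obtain ⟨v, ⟨⟨hpv, hvq⟩, hgv : g v = g q⟩, hleast⟩ :=
    (isCompact_Icc_inter_fiber hg (g q)).exists_isLeast ⟨q, right_mem_Icc.2 hpq, rfl⟩
  obtain ⟨u, ⟨⟨hpu, huv⟩, hgu : g u = g p⟩, hgreatest⟩ :=
    (isCompact_Icc_inter_fiber (hg.mono (Icc_subset_Icc_right hvq)) (g p)).exists_isGreatest
      ⟨p, left_mem_Icc.2 hpv, rfl⟩
  refine ⟨u, hI.out hp hq ⟨hpu, huv.trans hvq⟩, v, hI.out hp hq ⟨hpv, hvq⟩, hgu, hgv, ?_⟩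
  rw [uIcc_of_le huv]
  rintro y ⟨huy, hyv⟩
  by_contra hy
  have hpy : g p ≠ g y := fun h => hy (h ▸ left_mem_uIcc)
  have hqy : g q ≠ g y := fun h => hy (h ▸ right_mem_uIcc)
  obtain hbetween | hbetween : g p ∈ uIcc (g y) (g v) ∨ g q ∈ uIcc (g u) (g y) := by
    rw [hgu, hgv]
    simp only [mem_uIcc] at hy ⊢
    grind
  · have hgyv : ContinuousOn g (uIcc y v) :=
      hg.mono (uIcc_of_le hyv ▸ Icc_subset_Icc (hpu.trans huy) hvq)
    obtain ⟨z, hz, hgz⟩ := intermediate_value_uIcc hgyv hbetween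
    rw [uIcc_of_le hyv] at hz
    have hzu : z ≤ u := hgreatest ⟨⟨hpu.trans (huy.trans hz.1), hz.2⟩, hgz⟩
    exact hpy (hgu ▸ congrArg g (huy.antisymm (hz.1.trans hzu)))
  · have hguy : ContinuousOn g (uIcc u y) :=
      hg.mono (uIcc_of_le huy ▸ Icc_subset_Icc hpu (hyv.trans hvq))
    obtain ⟨z, hz, hgz⟩ := intermediate_value_uIcc hguy hbetween
    rw [uIcc_of_le huy] at hz
    have hvz : v ≤ z := hleast ⟨⟨hpu.trans hz.1, hz.2.trans (hyv.trans hvq)⟩, hgz⟩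
    exact hqy (hgv ▸ congrArg g ((hvz.trans hz.2).antisymm hyv))

theorem exists_isFixedPt_of_mem_uIcc {g : α → α} {u v : α} (hg : ContinuousOn g (uIcc u v))
    (hu : u ∈ uIcc (g u) (g v)) (hv : v ∈ uIcc (g u) (g v)) :
    ∃ y ∈ uIcc u v, IsFixedPt g y :=
  exists_mem_uIcc_isFixedPt_of_surjOn hg
    ((uIcc_subset_uIcc hu hv).trans (intermediate_value_uIcc hg))

theorem exists_uIcc_itinerary {f : α → α} {J : ℕ → Set α} {n : ℕ}
    (hJ : ∀ i ≤ n, (J i).OrdConnected) (hf : ∀ i < n, ContinuousOn f (J i))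
    (hcov : ∀ i < n, SurjOn f (J i) (J (i + 1))) {a b : α} (ha : a ∈ J n) (hb : b ∈ J n) :
    ∃ u ∈ J 0, ∃ v ∈ J 0, f^[n] u = a ∧ f^[n] v = b ∧
      ∀ y ∈ uIcc u v, ∀ i ≤ n, f^[i] y ∈ J i := by
  induction n generalizing J with
  | zero =>
    refine ⟨a, ha, b, hb, rfl, rfl, fun y hy i hi => ?_⟩
    obtain rfl := Nat.le_zero.1 hi
    exact (hJ 0 le_rfl).uIcc_subset ha hb hy
  | succ n ih =>
    obtain ⟨u', hu', v', hv', rfl, rfl, hitin⟩ := ih (J := fun i => J (i + 1))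
      (fun i hi => hJ _ (by omega)) (fun i hi => hf _ (by omega)) (fun i hi => hcov _ (by omega))
      ha hb
    have hcov₀ := hcov 0 n.succ_pos
    obtain ⟨u, hu, v, hv, rfl, rfl, hmaps⟩ := exists_mapsTo_uIcc_of_mem_image
      (hJ 0 (Nat.zero_le _)) (hf 0 n.succ_pos) (hcov₀ hu') (hcov₀ hv')
    refine ⟨u, hu, v, hv, rfl, rfl, fun y hy i hi => ?_⟩
    cases i with
    | zero => exact (hJ 0 (Nat.zero_le _)).uIcc_subset hu hv hy
    | succ i => exact hitin (f y) (hmaps hy) i (by omega)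

theorem exists_isPeriodicPt_itinerary {f : α → α} {s : Set α} {J : ℕ → Set α} {n : ℕ}
    (hf : ContinuousOn f s) (hmaps : MapsTo f s s) (hJs : ∀ i ≤ n, J i ⊆ s)
    (hJ : ∀ i ≤ n, (J i).OrdConnected) (hcov : ∀ i < n, SurjOn f (J i) (J (i + 1))) {a b : α}
    (ha : a ∈ J n) (hb : b ∈ J n) (h₀ : J 0 ⊆ uIcc a b) :
    ∃ y, IsPeriodicPt f n y ∧ ∀ i ≤ n, f^[i] y ∈ J i := by
  obtain ⟨u, hu, v, hv, hfu, hfv, hitin⟩ := exists_uIcc_itinerary hJ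
    (fun i hi => hf.mono (hJs i hi.le)) hcov ha hb
  have huv : uIcc u v ⊆ s := ((hJ 0 n.zero_le).uIcc_subset hu hv).trans (hJs 0 n.zero_le)
  obtain ⟨y, hy, hfix⟩ := exists_isFixedPt_of_mem_uIcc ((hf.iterate hmaps n).mono huv)
    (by rw [hfu, hfv]; exact h₀ hu) (by rw [hfu, hfv]; exact h₀ hv)
  exact ⟨y, hfix, hitin y hy⟩

end Covering

/-! ### The central gap of an odd cycle -/

theorem iff_even_of_alternating {u : ℕ → Prop} {n : ℕ} (h : ∀ i < n, u (i + 1) ↔ ¬ u i)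
    (h₀ : u 0) {i : ℕ} (hi : i ≤ n) : u i ↔ Even i := by
  induction i with
  | zero => simpa using h₀
  | succ i ih => rw [h i hi, ih (Nat.le_of_succ_le hi), Nat.even_add_one]

/-- `c < d` are neighbouring points of `O` and `f` sends each of them to the other one or beyond,
so that `[c, d]` covers itself. -/
structure IsCentralGap {α : Type*} [LinearOrder α] (f : α → α) (O : Set α) (c d : α) : Prop where
  left_mem : c ∈ O
  right_mem : d ∈ O
  lt : c < d
  le_or_le : ∀ y ∈ O, y ≤ c ∨ d ≤ y
  le_map_left : d ≤ f c
  map_right_le : f d ≤ c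

theorem uIcc_dual_comm {α : Type*} [Lattice α] (a b : α) : uIcc (α := αᵒᵈ) b a = uIcc a b :=
  (uIcc_toDual b a).trans (uIcc_comm b a)

theorem exists_isCentralGap {α : Type*} [LinearOrder α] {f : α → α} {O : Set α} (hfin : O.Finite)
    (hne : O.Nonempty) (hmaps : MapsTo f O O) (hfix : ∀ y ∈ O, f y ≠ y) :
    ∃ c d, IsCentralGap f O c d := by
  obtain ⟨x, hx, hxmin⟩ := O.exists_min_image id hfin hne
  have hup : {y ∈ O | y < f y}.Nonempty :=
    ⟨x, hx, (hxmin _ (hmaps hx)).lt_of_ne (hfix x hx).symm⟩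
  obtain ⟨c, ⟨hc, hfc⟩, hcmax⟩ := exists_max_image _ id (hfin.subset (sep_subset _ _)) hup
  obtain ⟨d, ⟨hd, hcd⟩, hdmin⟩ := exists_min_image {y ∈ O | c < y} id
    (hfin.subset (sep_subset _ _)) ⟨f c, hmaps hc, hfc⟩
  have hgap : ∀ y ∈ O, y ≤ c ∨ d ≤ y := fun y hy =>
    (le_or_gt y c).imp_right fun hcy => hdmin y ⟨hy, hcy⟩
  refine ⟨c, d, hc, hd, hcd, hgap, hdmin _ ⟨hmaps hc, hfc⟩, ?_⟩
  have hfd : f d < d := (le_of_not_gt fun h => (hcmax d ⟨hd, h⟩).not_gt hcd).lt_of_ne (hfix d hd)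
  exact (hgap _ (hmaps hd)).resolve_right hfd.not_ge

/-- The points `p, f p, …, f^{m-1} p` are arranged as
`⋯ < f^4 p < f^2 p < p < f p < f^3 p < ⋯`; the mirror image is obtained by reversing the order. -/
structure IsStefanOrdered {α : Type*} [Preorder α] (f : α → α) (m : ℕ) (p : α) : Prop where
  lt_map : p < f p
  even : StrictAntiOn (fun i => f^[i] p) {i | Even i ∧ i < m}
  odd : StrictMonoOn (fun i => f^[i] p) {i | Odd i ∧ i < m}

namespace IsCentralGap

theorem dual {α : Type*} [LinearOrder α] {f : α → α} {O : Set α} {c d : α}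
    (h : IsCentralGap f O c d) : IsCentralGap (α := αᵒᵈ) f O d c :=
  ⟨h.right_mem, h.left_mem, h.lt, fun y hy => (h.le_or_le y hy).symm, h.map_right_le,
    h.le_map_left⟩

theorem uIcc_subset {α : Type*} [LinearOrder α] {f : α → α} {s O : Set α} {c d : α}
    (h : IsCentralGap f O c d) (hs : s.OrdConnected) (hO : O ⊆ s) : uIcc c d ⊆ s :=
  hs.uIcc_subset (hO h.left_mem) (hO h.right_mem)

variable {α : Type*} [ConditionallyCompleteLinearOrder α] [TopologicalSpace α] [OrderTopology α]
  [DenselyOrdered α] {f : α → α} {s O : Set α} {c d q x : α} {n : ℕ}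

theorem surjOn_uIcc (h : IsCentralGap f O c d) (hf : ContinuousOn f (uIcc c d)) :
    SurjOn f (uIcc c d) (uIcc c d) :=
  (uIcc_subset_uIcc (mem_uIcc.2 (.inr ⟨h.map_right_le, h.lt.le.trans h.le_map_left⟩))
    (mem_uIcc.2 (.inr ⟨h.map_right_le.trans h.lt.le, h.le_map_left⟩))).trans
    (intermediate_value_uIcc hf)

theorem lt_map_of_mem_image_iterate (h : IsCentralGap f O c d) (hs : s.OrdConnected) (hO : O ⊆ s)
    (hf : ContinuousOn f s) (hmaps : MapsTo f s s)
    (hloop : ∀ y ∈ s, IsPeriodicPt f (n + 1) y → IsFixedPt f y)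
    (hq : q ∈ f^[n] '' uIcc c d) (hqc : q ≤ c) : c < f q := by
  by_contra! hfq
  -- Otherwise `[c, d]` covers `[q, c]` under `f^n` and `[q, c]` covers `[c, d]` under `f`.
  have hsub : uIcc c d ⊆ s := h.uIcc_subset hs hO
  have hc : c ∈ f^[n] '' uIcc c d := (h.surjOn_uIcc (hf.mono hsub)).iterate n left_mem_uIcc
  obtain ⟨u, hu, v, hv, hfu, hfv, huv⟩ := exists_mapsTo_uIcc_of_mem_image ordConnected_uIcc
    ((hf.iterate hmaps n).mono hsub) hq hc
  have hsub' : uIcc u v ⊆ uIcc c d := uIcc_subset_uIcc hu hv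
  have hcover : uIcc c d ⊆ uIcc (f^[n + 1] u) (f^[n + 1] v) := by
    rw [iterate_succ_apply', iterate_succ_apply', hfu, hfv]
    exact uIcc_subset_uIcc (mem_uIcc.2 (.inl ⟨hfq, h.lt.le.trans h.le_map_left⟩))
      (mem_uIcc.2 (.inl ⟨hfq.trans h.lt.le, h.le_map_left⟩))
  obtain ⟨y, hy, hyfix⟩ := exists_isFixedPt_of_mem_uIcc
    ((hf.iterate hmaps (n + 1)).mono (hsub'.trans hsub)) (hcover hu) (hcover hv)
  have hfy : IsFixedPt f y := hloop y (hsub (hsub' hy)) hyfix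
  have hyc : y ≤ c := by
    have := huv hy
    rw [(hfy.iterate n).eq, uIcc_of_le hqc] at this
    exact this.2
  have hcy : c ≤ y := by
    have := hsub' hy
    rw [uIcc_of_le h.lt.le] at this
    exact this.1
  obtain rfl := hyc.antisymm hcy
  exact (h.lt.trans_le h.le_map_left).ne hfy.symm

theorem map_le_iff_not_le (h : IsCentralGap f O c d) (hs : s.OrdConnected) (hO : O ⊆ s)
    (hf : ContinuousOn f s) (hmaps : MapsTo f s s) (hOmaps : MapsTo f O O)
    (hloop : ∀ y ∈ s, IsPeriodicPt f (n + 1) y → IsFixedPt f y)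
    (hqO : q ∈ O) (hq : q ∈ f^[n] '' uIcc c d) : f q ≤ c ↔ ¬ q ≤ c := by
  refine ⟨fun hfq hqc =>
    (h.lt_map_of_mem_image_iterate hs hO hf hmaps hloop hq hqc).not_ge hfq, fun hqc => ?_⟩
  have hdq : d ≤ q := (h.le_or_le q hqO).resolve_left hqc
  have hfq : f q < d := h.dual.lt_map_of_mem_image_iterate hs.dual hO hf hmaps hloop
    (uIcc_dual_comm c d ▸ hq) hdq
  exact (h.le_or_le _ (hOmaps hqO)).resolve_right hfq.not_ge

theorem not_subset_image_iterate (h : IsCentralGap f O c d) (hs : s.OrdConnected) (hO : O ⊆ s)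
    (hf : ContinuousOn f s) (hmaps : MapsTo f s s) (hOmaps : MapsTo f O O)
    (hloop : ∀ y ∈ s, IsPeriodicPt f (n + 1) y → IsFixedPt f y)
    (hodd : Odd (minimalPeriod f c)) : ¬ O ⊆ f^[n] '' uIcc c d := by
  intro hsub
  have hside : f^[minimalPeriod f c] c ≤ c ↔ Even (minimalPeriod f c) :=
    iff_even_of_alternating (u := fun i => f^[i] c ≤ c)
      (fun i _ => by
        have hi : f^[i] c ∈ O := hOmaps.iterate i h.left_mem
        rw [iterate_succ_apply']
        exact h.map_le_iff_not_le hs hO hf hmaps hOmaps hloop hi (hsub hi))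
      le_rfl le_rfl
  rw [iterate_minimalPeriod] at hside
  exact Nat.not_even_iff_odd.2 hodd (hside.1 le_rfl)

theorem map_left_eq_or_map_right_eq (h : IsCentralGap f (forwardOrbit f x) c d)
    (hf : ContinuousOn f (uIcc c d)) (hx : minimalPeriod f x = n + 3)
    (hn : ¬ forwardOrbit f x ⊆ f^[n] '' uIcc c d) : f c = d ∨ f d = c := by
  by_contra! hne
  have hxper : x ∈ periodicPts f := minimalPeriod_pos_iff_mem_periodicPts.1 (by omega)
  have hA : SurjOn f (uIcc c d) (uIcc c d) := h.surjOn_uIcc hf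
  have hcard := ncard_forwardOrbit_inter_image_iterate_add_le hA
    ⟨c, h.left_mem, left_mem_uIcc⟩ hxper hn (add_comm 1 n)
  have hsub : {f d, c, d, f c} ⊆ forwardOrbit f x ∩ f^[1] '' uIcc c d := by
    have hmaps := mapsTo_forwardOrbit f x
    rintro y (rfl | rfl | rfl | rfl)
    · exact ⟨hmaps h.right_mem, d, right_mem_uIcc, rfl⟩
    · exact ⟨h.left_mem, hA left_mem_uIcc⟩
    · exact ⟨h.right_mem, hA right_mem_uIcc⟩
    · exact ⟨hmaps h.left_mem, c, left_mem_uIcc, rfl⟩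
  have hfd : f d < c := h.map_right_le.lt_of_ne hne.2
  have hfc : d < f c := h.le_map_left.lt_of_ne hne.1.symm
  have hfour : ({f d, c, d, f c} : Set α).ncard = 4 := by
    have hcd := h.lt
    rw [ncard_insert_of_notMem, ncard_insert_of_notMem, ncard_pair] <;>
      grind
  have := ncard_le_ncard hsub ((finite_forwardOrbit hxper).inter_of_left _)
  omega

theorem iterate_le_left_iff_even (h : IsCentralGap f (forwardOrbit f c) c d) (hs : s.OrdConnected)
    (hO : forwardOrbit f c ⊆ s) (hf : ContinuousOn f s) (hmaps : MapsTo f s s)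
    (hloop : ∀ y ∈ s, IsPeriodicPt f (n + 1) y → IsFixedPt f y) (hfc : f c = d) {i : ℕ}
    (hi : i ≤ n + 2) : f^[i] c ≤ c ↔ Even i := by
  have hA : SurjOn f (uIcc c d) (uIcc c d) := h.surjOn_uIcc (hf.mono (h.uIcc_subset hs hO))
  refine iff_even_of_alternating (u := fun i => f^[i] c ≤ c) (fun i hi => ?_) le_rfl hi
  rw [iterate_succ_apply']
  exact h.map_le_iff_not_le hs hO hf hmaps (mapsTo_forwardOrbit f c) hloop
    (iterate_mem_forwardOrbit f c i)
    (iterate_mem_image_iterate hA left_mem_uIcc (hfc ▸ right_mem_uIcc) (by omega))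

theorem isStefanOrdered_of_map_left_eq (h : IsCentralGap f (forwardOrbit f c) c d)
    (hs : s.OrdConnected) (hO : forwardOrbit f c ⊆ s) (hf : ContinuousOn f s)
    (hmaps : MapsTo f s s) (hloop : ∀ y ∈ s, IsPeriodicPt f (n + 1) y → IsFixedPt f y)
    (hfc : f c = d) (hc : minimalPeriod f c = n + 3) (hn : ¬ forwardOrbit f c ⊆ f^[n] '' uIcc c d) :
    IsStefanOrdered f (n + 3) c := by
  have hsub : uIcc c d ⊆ s := h.uIcc_subset hs hO
  have hA : SurjOn f (uIcc c d) (uIcc c d) := h.surjOn_uIcc (hf.mono hsub)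
  have hfcA : f c ∈ uIcc c d := hfc ▸ right_mem_uIcc
  have hmem {i j : ℕ} (hij : i ≤ j + 1) : f^[i] c ∈ f^[j] '' uIcc c d :=
    iterate_mem_image_iterate hA left_mem_uIcc hfcA hij
  have hnotMem {j : ℕ} (hj : j + 2 < n + 3) : f^[j + 2] c ∉ f^[j] '' uIcc c d :=
    iterate_add_two_notMem_image_iterate hA left_mem_uIcc hfcA hc hn hj
  have hconn (j : ℕ) : (f^[j] '' uIcc c d).OrdConnected :=
    (isPreconnected_uIcc.image _ ((hf.iterate hmaps j).mono hsub)).ordConnected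
  have hside {i : ℕ} (hi : i ≤ n + 2) : f^[i] c ≤ c ↔ Even i :=
    h.iterate_le_left_iff_even hs hO hf hmaps hloop hfc hi
  refine ⟨hfc ▸ h.lt, ?_, ?_⟩
  · rintro i - k ⟨hk, hkn⟩ hik
    obtain ⟨j, rfl⟩ : ∃ j, k = j + 2 := ⟨k - 2, by grind⟩
    refine lt_of_not_ge fun hle => hnotMem hkn ?_
    exact (hconn j).out (hmem (by omega)) (hmem (Nat.zero_le _)) ⟨hle, (hside (by omega)).2 hk⟩
  · rintro i ⟨hi, -⟩ k ⟨hk, hkn⟩ hik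
    obtain ⟨j, rfl⟩ : ∃ j, k = j + 2 := ⟨k - 2, by grind⟩
    refine lt_of_not_ge fun hle => hnotMem hkn ?_
    have hck : ¬ f^[j + 2] c ≤ c := (hside (by omega)).not.2 (Nat.not_even_iff_odd.2 hk)
    have hdk : f c ≤ f^[j + 2] c :=
      hfc ▸ (h.le_or_le _ (iterate_mem_forwardOrbit f c _)).resolve_left hck
    exact (hconn j).out (hmem (i := 1) (by omega)) (hmem (by omega)) ⟨hdk, hle⟩

end IsCentralGap

theorem exists_isStefanOrdered {α : Type*} [ConditionallyCompleteLinearOrder α]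
    [TopologicalSpace α] [OrderTopology α] [DenselyOrdered α] {f : α → α} {s : Set α} {x : α}
    {n : ℕ} (hs : s.OrdConnected) (hf : ContinuousOn f s) (hmaps : MapsTo f s s) (hx : x ∈ s)
    (hper : minimalPeriod f x = n + 3) (hn : Even n)
    (hloop : ∀ y ∈ s, IsPeriodicPt f (n + 1) y → IsFixedPt f y) :
    ∃ p ∈ forwardOrbit f x,
      IsStefanOrdered f (n + 3) p ∨ IsStefanOrdered (α := αᵒᵈ) f (n + 3) p := by
  have hxper : x ∈ periodicPts f := minimalPeriod_pos_iff_mem_periodicPts.1 (by omega)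
  have hO : forwardOrbit f x ⊆ s := forwardOrbit_subset hmaps hx
  have hOmaps := mapsTo_forwardOrbit f x
  have hperiod {y : α} (hy : y ∈ forwardOrbit f x) : minimalPeriod f y = n + 3 :=
    (minimalPeriod_of_mem_forwardOrbit hxper hy).trans hper
  obtain ⟨c, d, h⟩ := exists_isCentralGap (finite_forwardOrbit hxper)
    ⟨x, self_mem_forwardOrbit f x⟩ hOmaps fun y hy hfix => by
      have := hperiod hy
      rw [minimalPeriod_eq_one_iff_isFixedPt.2 hfix] at this
      omega
  have hesc : ¬ forwardOrbit f x ⊆ f^[n] '' uIcc c d :=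
    h.not_subset_image_iterate hs hO hf hmaps hOmaps hloop (by rw [hperiod h.left_mem]; grind)
  obtain hfc | hfd := h.map_left_eq_or_map_right_eq (hf.mono (h.uIcc_subset hs hO)) hper hesc
  · refine ⟨c, h.left_mem, .inl ?_⟩
    have hcx := forwardOrbit_eq_of_mem hxper h.left_mem
    have hcper := hperiod h.left_mem
    rw [← hcx] at h hO hesc
    exact h.isStefanOrdered_of_map_left_eq hs hO hf hmaps hloop hfc hcper hesc
  · refine ⟨d, h.right_mem, .inr ?_⟩
    have hdx := forwardOrbit_eq_of_mem hxper h.right_mem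
    have hdper := hperiod h.right_mem
    rw [← hdx] at h hO hesc
    exact h.dual.isStefanOrdered_of_map_left_eq hs.dual hO hf hmaps hloop hfd hdper
      (uIcc_dual_comm c d ▸ hesc)

/-! ### Periodic points of a Štefan cycle -/

/-- The `k`-th vertex of the covering graph of a Štefan cycle through `p`: the interval spanned by
`f^{k-1} p` and `f^{k+1} p` or, by truncation of `0 - 1`, by `p` and `f p` when `k = 0`. -/
def stefanInterval {α : Type*} [Lattice α] (f : α → α) (p : α) (k : ℕ) : Set α :=
  uIcc (f^[k - 1] p) (f^[k + 1] p)

theorem stefanInterval_subset {α : Type*} [LinearOrder α] {f : α → α} {s : Set α} {p : α}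
    (hs : s.OrdConnected) (hmaps : MapsTo f s s) (hp : p ∈ s) (k : ℕ) :
    stefanInterval f p k ⊆ s :=
  hs.uIcc_subset (hmaps.iterate _ hp) (hmaps.iterate _ hp)

theorem surjOn_uIcc_iterate {α : Type*} [ConditionallyCompleteLinearOrder α] [TopologicalSpace α]
    [OrderTopology α] [DenselyOrdered α] {f : α → α} {s : Set α} {p : α} (hs : s.OrdConnected)
    (hf : ContinuousOn f s) (hmaps : MapsTo f s s) (hp : p ∈ s) (i j : ℕ) :
    SurjOn f (uIcc (f^[i] p) (f^[j] p)) (uIcc (f^[i + 1] p) (f^[j + 1] p)) := by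
  rw [iterate_succ_apply', iterate_succ_apply']
  exact intermediate_value_uIcc
    (hf.mono (hs.uIcc_subset (hmaps.iterate i hp) (hmaps.iterate j hp)))

namespace IsStefanOrdered

section Preorder

variable {α : Type*} [Preorder α] {f : α → α} {p : α} {m i : ℕ}

theorem iterate_add_two_lt (h : IsStefanOrdered f m p) (hi : Even i) (him : i + 2 < m) :
    f^[i + 2] p < f^[i] p :=
  h.even ⟨hi, by omega⟩ ⟨hi.add even_two, him⟩ (by omega)

theorem lt_iterate_add_two (h : IsStefanOrdered f m p) (hi : Odd i) (him : i + 2 < m) :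
    f^[i] p < f^[i + 2] p :=
  h.odd ⟨hi, by omega⟩ ⟨hi.add_even even_two, him⟩ (by omega)

end Preorder

section LinearOrder

variable {α : Type*} [LinearOrder α] {f : α → α} {p : α} {m r i : ℕ}

theorem iterate_le (h : IsStefanOrdered f m p) (hi : Even i) (him : i < m) : f^[i] p ≤ p :=
  h.even.antitoneOn ⟨.zero, by omega⟩ ⟨hi, him⟩ i.zero_le

theorem lt_iterate (h : IsStefanOrdered f m p) (hi : Odd i) (him : i < m) : p < f^[i] p :=
  h.lt_map.trans_le (h.odd.monotoneOn ⟨odd_one, by grind⟩ ⟨hi, him⟩ hi.pos)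

theorem iterate_le_iterate (h : IsStefanOrdered f (r + 3) p) (hr : Even r) (hi : i ≤ r + 1) :
    f^[r] p ≤ f^[i] p := by
  obtain heven | hodd := i.even_or_odd
  · exact h.even.antitoneOn ⟨heven, by omega⟩ ⟨hr, by omega⟩ (by grind)
  · exact (h.iterate_le hr (by omega)).trans (h.lt_iterate hodd (by omega)).le

theorem stefanInterval_subset_Ici (h : IsStefanOrdered f (r + 3) p) (hr : Even r) {k : ℕ}
    (hk : k ≤ r) : stefanInterval f p k ⊆ Ici (f^[r] p) :=
  ordConnected_Ici.uIcc_subset (h.iterate_le_iterate hr (by omega))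
    (h.iterate_le_iterate hr (by omega))

theorem stefanInterval_subset_Iic (h : IsStefanOrdered f (r + 3) p) (hr : Even r) :
    stefanInterval f p (r + 1) ⊆ Iic (f^[r] p) :=
  ordConnected_Iic.uIcc_subset self_mem_Iic
    (h.even.antitoneOn ⟨hr, by omega⟩ ⟨by grind, by omega⟩ (by omega))

theorem iterate_notMem_stefanInterval_zero (h : IsStefanOrdered f (r + 3) p) (hr : Even r) :
    f^[r + 2] p ∉ stefanInterval f p 0 := by
  have hlt : f^[r + 2] p < p :=
    h.even ⟨.zero, by omega⟩ ⟨by grind, by omega⟩ (by omega : 0 < r + 2)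
  exact fun hmem => hlt.not_ge (ordConnected_Ici.uIcc_subset self_mem_Ici h.lt_map.le hmem)

end LinearOrder

variable {α : Type*} [ConditionallyCompleteLinearOrder α] [TopologicalSpace α] [OrderTopology α]
  [DenselyOrdered α] {f : α → α} {s : Set α} {p : α} {r k n : ℕ}

theorem surjOn_stefanInterval_zero (h : IsStefanOrdered f (r + 3) p) (hs : s.OrdConnected)
    (hf : ContinuousOn f s) (hmaps : MapsTo f s s) (hp : p ∈ s) :
    SurjOn f (stefanInterval f p 0) (stefanInterval f p 0) := by
  refine (surjOn_uIcc_iterate hs hf hmaps hp 0 1).mono subset_rfl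
    (uIcc_subset_uIcc (mem_uIcc.2 (.inr ⟨?_, h.lt_map.le⟩)) left_mem_uIcc)
  exact h.iterate_le even_two (by omega)

theorem surjOn_stefanInterval_succ (h : IsStefanOrdered f (r + 3) p) (hs : s.OrdConnected)
    (hf : ContinuousOn f s) (hmaps : MapsTo f s s) (hp : p ∈ s) (k : ℕ) :
    SurjOn f (stefanInterval f p k) (stefanInterval f p (k + 1)) := by
  cases k with
  | zero =>
    refine (surjOn_uIcc_iterate hs hf hmaps hp 0 1).mono subset_rfl
      (uIcc_subset_uIcc (mem_uIcc.2 (.inr ⟨?_, h.lt_map.le⟩)) right_mem_uIcc)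
    exact h.iterate_le even_two (by omega)
  | succ k => exact surjOn_uIcc_iterate hs hf hmaps hp k (k + 2)

theorem surjOn_stefanInterval_last (h : IsStefanOrdered f (r + 3) p) (hs : s.OrdConnected)
    (hf : ContinuousOn f s) (hmaps : MapsTo f s s) (hp : p ∈ s) (hr : Even r)
    (hper : IsPeriodicPt f (r + 3) p) (hk : Even k) (hkr : k ≤ r) :
    SurjOn f (stefanInterval f p (r + 1)) (stefanInterval f p k) := by
  have hbetween {i : ℕ} (hi : i = 0 ∨ Odd i) (hir : i ≤ r + 1) :
      f^[i] p ∈ uIcc (f^[r + 1] p) (f^[r + 3] p) := by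
    rw [hper.eq, mem_uIcc]
    obtain rfl | hi := hi
    · exact .inr ⟨le_rfl, (h.lt_iterate hr.add_one (by omega)).le⟩
    · exact .inr ⟨(h.lt_iterate hi (by omega)).le,
        h.odd.monotoneOn ⟨hi, by omega⟩ ⟨hr.add_one, by omega⟩ hir⟩
  exact (surjOn_uIcc_iterate hs hf hmaps hp r (r + 2)).mono subset_rfl
    (uIcc_subset_uIcc (hbetween (by grind) (by omega)) (hbetween (by grind) (by omega)))

theorem exists_isPeriodicPt_stefanInterval (h : IsStefanOrdered f (r + 3) p) (hs : s.OrdConnected)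
    (hf : ContinuousOn f s) (hmaps : MapsTo f s s) (hp : p ∈ s) (hr : Even r)
    (hper : IsPeriodicPt f (r + 3) p) (hn : Even n ∧ 0 < n ∨ r + 3 < n) :
    ∃ y ∈ stefanInterval f p (r + 1), IsPeriodicPt f n y ∧
      ∀ i, 0 < i → i ≤ n → f^[i] y ∈ stefanInterval f p (r + 1 - (n - i)) := by
  -- The loop leaves the last vertex, stays at vertex `0` (subtraction truncates) if `n` is large,
  -- and then climbs back one vertex at a time.
  let e : ℕ → ℕ := fun i => if i = 0 then r + 1 else r + 1 - (n - i)
  have he {i : ℕ} (hi : 0 < i) : e i = r + 1 - (n - i) := if_neg hi.ne'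
  have hn₂ : 2 ≤ n := by grind
  have hen : e n = r + 1 := by grind
  have hcov : ∀ i < n, SurjOn f (stefanInterval f p (e i)) (stefanInterval f p (e (i + 1))) := by
    intro i hi
    rw [he i.succ_pos]
    obtain rfl | hi₀ := i.eq_zero_or_pos
    · exact h.surjOn_stefanInterval_last hs hf hmaps hp hr hper (by grind) (by omega)
    rw [he hi₀]
    obtain hlt | hle := lt_or_ge (n - i) (r + 2)
    · rw [show r + 1 - (n - (i + 1)) = r + 1 - (n - i) + 1 by omega]
      exact h.surjOn_stefanInterval_succ hs hf hmaps hp _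
    · rw [show r + 1 - (n - (i + 1)) = 0 by omega, show r + 1 - (n - i) = 0 by omega]
      exact h.surjOn_stefanInterval_zero hs hf hmaps hp
  obtain ⟨y, hy, hitin⟩ := exists_isPeriodicPt_itinerary hf hmaps
    (J := fun i => stefanInterval f p (e i)) (fun i _ => stefanInterval_subset hs hmaps hp _)
    (fun _ _ => ordConnected_uIcc) hcov (hen ▸ left_mem_uIcc) (hen ▸ right_mem_uIcc) subset_rfl
  exact ⟨y, hitin 0 n.zero_le, hy, fun i hi hin => he hi ▸ hitin i hin⟩

theorem exists_minimalPeriod_eq (h : IsStefanOrdered f (r + 3) p) (hs : s.OrdConnected)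
    (hf : ContinuousOn f s) (hmaps : MapsTo f s s) (hp : p ∈ s) (hr : Even r)
    (hper : minimalPeriod f p = r + 3) (hn : Even n ∧ 0 < n ∨ r + 3 < n) :
    ∃ y ∈ s, minimalPeriod f y = n := by
  have hpper : IsPeriodicPt f (r + 3) p := hper ▸ isPeriodicPt_minimalPeriod f p
  obtain ⟨y, hy, hyn, hitin⟩ :=
    h.exists_isPeriodicPt_stefanInterval hs hf hmaps hp hr hpper hn
  refine ⟨y, stefanInterval_subset hs hmaps hp _ hy,
    (minimalPeriod_eq_iff_iterate (by omega)).2 ⟨hyn, fun i hi hin hiy => ?_⟩⟩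
  have hyr : y = f^[r] p := by
    refine (h.stefanInterval_subset_Iic hr hy).antisymm ?_
    exact hiy ▸ h.stefanInterval_subset_Ici hr (by omega) (hitin i hi hin.le)
  have hdvd : r + 3 ∣ n := by
    rw [← hper, ← minimalPeriod_apply_iterate (mk_mem_periodicPts (by omega) hpper) r, ← hyr]
    exact hyn.minimalPeriod_dvd
  have hlt : r + 3 < n := by
    refine hn.elim (fun hn => (Nat.le_of_dvd hn.2 hdvd).lt_of_ne ?_) id
    grind
  apply h.iterate_notMem_stefanInterval_zero hr
  have hmem := hitin 2 two_pos (by omega)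
  rwa [show r + 1 - (n - 2) = 0 by omega, hyr, ← iterate_add_apply, add_comm 2 r] at hmem

end IsStefanOrdered

theorem stefan_structure_of_minimal_odd_orbit_general {α : Type*}
    [ConditionallyCompleteLinearOrder α] [TopologicalSpace α] [OrderTopology α] [DenselyOrdered α]
    {f : α → α} {s : Set α} (hs : s.OrdConnected) (hf : ContinuousOn f s) (hmaps : MapsTo f s s)
    {m : ℕ} (hm : 3 ≤ m) (hodd : Odd m) {x : α} (hx : x ∈ s) (hper : minimalPeriod f x = m)
    (hloop : ∀ y ∈ s, IsPeriodicPt f (m - 2) y → IsFixedPt f y) :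
    (∃ p ∈ forwardOrbit f x, IsStefanOrdered f m p ∨ IsStefanOrdered (α := αᵒᵈ) f m p) ∧
      (∀ n, Even n → 0 < n → ∃ y ∈ s, minimalPeriod f y = n) ∧
      ∀ n, m < n → ∃ y ∈ s, minimalPeriod f y = n := by
  obtain ⟨r, rfl⟩ : ∃ r, m = r + 3 := ⟨m - 3, by omega⟩
  have hr : Even r := by grind
  have hxper : x ∈ periodicPts f := minimalPeriod_pos_iff_mem_periodicPts.1 (by omega)
  obtain ⟨p, hpx, hp⟩ := exists_isStefanOrdered hs hf hmaps hx hper hr hloop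
  have hps : p ∈ s := forwardOrbit_subset hmaps hx hpx
  have hpper : minimalPeriod f p = r + 3 :=
    (minimalPeriod_of_mem_forwardOrbit hxper hpx).trans hper
  have hperiods {n : ℕ} (hn : Even n ∧ 0 < n ∨ r + 3 < n) : ∃ y ∈ s, minimalPeriod f y = n :=
    hp.elim (·.exists_minimalPeriod_eq hs hf hmaps hps hr hpper hn)
      (·.exists_minimalPeriod_eq hs.dual hf hmaps hps hr hpper hn)
  exact ⟨⟨p, hpx, hp⟩, fun n heven hn => hperiods (.inl ⟨heven, hn⟩),
    fun n hn => hperiods (.inr hn)⟩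

theorem isStefanCycle_of_isStefanOrdered {f : ℝ → ℝ} {m : ℕ} {x p : ℝ} (hx : x ∈ periodicPts f)
    (hper : minimalPeriod f x = m) (hp : p ∈ forwardOrbit f x)
    (h : IsStefanOrdered f m p ∨ IsStefanOrdered (α := ℝᵒᵈ) f m p) :
    IsStefanCycle f m {y | ∃ i < m, y = f^[i] x} := by
  have hpper : IsPeriodicPt f m p :=
    hper ▸ minimalPeriod_of_mem_forwardOrbit hx hp ▸ isPeriodicPt_minimalPeriod f p
  rw [forwardOrbit_eq_image hx, hper] at hp
  obtain ⟨i, hi, hip⟩ := hp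
  refine ⟨p, ⟨i, hi, hip.symm⟩, hpper, ?_⟩
  obtain h | h := h
  · exact .inr ⟨fun i hi him => h.iterate_add_two_lt hi (by omega), h.lt_map,
      fun i hi him => h.lt_iterate_add_two hi (by omega)⟩
  · exact .inl ⟨fun i hi him => h.lt_iterate_add_two hi (by omega), h.lt_map,
      fun i hi him => h.iterate_add_two_lt hi (by omega)⟩

theorem periodPt_iff_minimalPeriod_eq {f : ℝ → ℝ} {n : ℕ} {x : ℝ} (hn : 0 < n) :
    PeriodPt f n x ↔ minimalPeriod f x = n :=
  (minimalPeriod_eq_iff_iterate hn).symm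

theorem stefan_structure_of_minimal_odd_orbit (a b : ℝ) (hab : a ≤ b) (f : ℝ → ℝ)
    (hcont : ContinuousOn f (Set.Icc a b))
    (hmaps : Set.MapsTo f (Set.Icc a b) (Set.Icc a b))
    (m : ℕ) (hm : 3 ≤ m) (hodd : Odd m)
    (x : ℝ) (hx : x ∈ Set.Icc a b) (hper : PeriodPt f m x)
    (P : Set ℝ) (hP : P = {y | ∃ i < m, y = f^[i] x})
    (hno : ∀ ℓ : ℕ, Odd ℓ → 1 < ℓ → ℓ < m → ¬ ∃ y ∈ Set.Icc a b, PeriodPt f ℓ y) :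
    IsStefanCycle f m P ∧
      (∀ n : ℕ, Even n → 0 < n → ∃ y ∈ Set.Icc a b, PeriodPt f n y) ∧
      (∀ n : ℕ, m < n → ∃ y ∈ Set.Icc a b, PeriodPt f n y) := by
  subst hP
  have hperiod {n : ℕ} (hn : 0 < n) {y : ℝ} := periodPt_iff_minimalPeriod_eq (f := f) (x := y) hn
  replace hper := (hperiod hodd.pos).1 hper
  have hxper : x ∈ periodicPts f := minimalPeriod_pos_iff_mem_periodicPts.1 (by omega)
  have hloop : ∀ y ∈ Icc a b, IsPeriodicPt f (m - 2) y → IsFixedPt f y := fun y hy hyper =>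
    isFixedPt_of_isPeriodicPt_of_odd (by grind) hyper fun ℓ hℓ hℓ₁ hℓm hyℓ =>
      hno ℓ hℓ hℓ₁ (by omega) ⟨y, hy, (hperiod hℓ.pos).2 hyℓ⟩
  obtain ⟨⟨p, hpx, hp⟩, heven, hlarge⟩ := stefan_structure_of_minimal_odd_orbit_general
    ordConnected_Icc hcont hmaps hm hodd hx hper hloop
  exact ⟨isStefanCycle_of_isStefanOrdered hxper hper hpx hp,
    fun n hn hn₀ => (heven n hn hn₀).imp fun y => .imp_right (hperiod hn₀).2,
    fun n hn => (hlarge n hn).imp fun y => .imp_right (hperiod (by omega)).2⟩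
end

section
/- Let n ≥ 2 and suppose the continuous map f : I → I has a period-2^n point. Then there exists ε > 0 such that every continuous map g : I → I with sup_{x ∈ I} |g(x) − f(x)| < ε has a period-2^{n−1} point. -/
/-!
Let `F` be a continuous self-map of a compact interval. If `u < F u` and `F (F u) < u`, then `F` has
a point of period `2`, and these strict inequalities at a single point survive small perturbations
of `F`. Such a `u` exists as soon as `F` has a cycle on which `F ∘ F` is not the identity. Let `p`
be the least point of the cycle and `s` its predecessor. On its way from `p` to `s` the cycle has a
step from some `w ≤ s` to `F w ≥ s`, while `F s = p ≤ s`; so `s` has a preimage `u` in `[w, s]`, and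
`u < s = F u`, `F (F u) = p < u`.
For period `2 ^ n`, take `F = f^[2 ^ (n - 2)]`.
-/

open Set Function Filter Topology

section Periodic

variable {α : Type*}

lemma exists_iterate_forall_iterate_le [LinearOrder α] {f : α → α} {x : α}
    (hx : x ∈ periodicPts f) : ∃ i, ∀ j, f^[i] x ≤ f^[j] x := by
  obtain ⟨n, hn, hper⟩ := hx
  obtain ⟨i, -, hi⟩ := (Finset.range n).exists_min_image (f^[·] x) ⟨0, Finset.mem_range.2 hn⟩
  refine ⟨i, fun j => ?_⟩
  rw [← hper.iterate_mod_apply j]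
  exact hi _ (Finset.mem_range.2 (Nat.mod_lt j hn))

lemma exists_iterate_le_and_le_apply_iterate [LinearOrder α] {f : α → α} {p : α} {k : ℕ}
    (hper : f^[k + 1] p = p) (hle : p ≤ f^[k] p) :
    ∃ j, f^[j] p ≤ f^[k] p ∧ f^[k] p ≤ f (f^[j] p) := by
  by_contra! hstep
  have hbelow (j : ℕ) : f^[j] p ≤ f^[k] p := by
    induction j with
    | zero => exact hle
    | succ j ih => exact iterate_succ_apply' f j p ▸ (hstep j ih).le
  have hreturn : f (f^[k + k] p) = f^[k] p := by
    rw [← iterate_succ_apply' f, ← Nat.add_succ, iterate_add_apply, hper]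
  exact (hstep _ (hbelow _)).ne hreturn

lemma minimalPeriod_eq_prime_pow_succ_of_iterate {f : α → α} {x : α} {p k : ℕ}
    [hp : Fact p.Prime] (h : minimalPeriod f^[p ^ k] x = p) :
    minimalPeriod f x = p ^ (k + 1) := by
  obtain ⟨hper, hfix⟩ := minimalPeriod_eq_prime_iff.1 h
  refine minimalPeriod_eq_prime_pow hfix ?_
  rwa [IsPeriodicPt, ← iterate_mul, ← pow_succ] at hper

end Periodic

lemma periodPt_minimalPeriod (f : ℝ → ℝ) (x : ℝ) : PeriodPt f (minimalPeriod f x) x :=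
  ⟨iterate_minimalPeriod, fun _ hi hlt => not_isPeriodicPt_of_pos_of_lt_minimalPeriod hi.ne' hlt⟩

section IntermediateValue

variable {α : Type*} [ConditionallyCompleteLinearOrder α] [DenselyOrdered α] [TopologicalSpace α]
  [OrderTopology α]

lemma exists_minimalPeriod_eq_two {a b u : α} {f : α → α} (hf : ContinuousOn f (Icc a b))
    (hmaps : MapsTo f (Icc a b) (Icc a b)) (hu : u ∈ Icc a b) (hle : u ≤ f u)
    (hlt : f (f u) < u) : ∃ y ∈ Icc a b, minimalPeriod f y = 2 := by
  have hsub : Icc a u ⊆ Icc a b := Icc_subset_Icc_right hu.2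
  have hf₂ : ContinuousOn (f ∘ f) (Icc a b) := hf.comp hf hmaps
  have ha : a ∈ Icc a b := left_mem_Icc.2 (hu.1.trans hu.2)
  -- `t` is the last point of `[a, u]` that `f ∘ f` does not move down.
  obtain ⟨t, ⟨ht, htt⟩, hlast⟩ :=
    (isCompact_Icc.of_isClosed_subset
      (isClosed_Icc.isClosed_le continuousOn_id (hf₂.mono hsub)) (sep_subset _ _)).exists_isGreatest
      ⟨a, left_mem_Icc.2 hu.1, (hmaps (hmaps ha)).1⟩
  have hsub' : Icc t u ⊆ Icc a b := Icc_subset_Icc ht.1 hu.2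
  have hper : IsPeriodicPt f 2 t := by
    obtain ⟨r, hr, hfix⟩ := exists_mem_Icc_isFixedPt (hf₂.mono hsub') ht.2 htt hlt.le
    have hrt : r ≤ t := hlast ⟨⟨ht.1.trans hr.1, hr.2⟩, hfix.ge⟩
    exact hrt.antisymm hr.1 ▸ hfix
  refine ⟨t, hsub ht, minimalPeriod_eq_prime hper fun hfix => ?_⟩
  -- A preimage of `u` in `[t, u]` is not moved down by `f ∘ f` either, so it would be `t`.
  obtain ⟨r, hr, hru⟩ := intermediate_value_Icc ht.2 (hf.mono hsub') ⟨hfix.le.trans ht.2, hle⟩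
  have hrr : r ≤ f (f r) := hru ▸ hr.2.trans hle
  have hrt : r = t := (hlast ⟨⟨ht.1.trans hr.1, hr.2⟩, hrr⟩).antisymm hr.1
  have htu : t = u := hfix.symm.trans (hrt ▸ hru)
  exact hlt.not_ge (htu ▸ htt)

lemma exists_lt_apply_and_apply_apply_lt {I : Set α} [I.OrdConnected] {f : α → α} {x : α}
    (hf : ContinuousOn f I) (hmaps : MapsTo f I I) (hx : x ∈ I) (hper : x ∈ periodicPts f)
    (hx₂ : ¬IsPeriodicPt f 2 x) : ∃ u ∈ I, u < f u ∧ f (f u) < u := by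
  obtain ⟨i, hmin⟩ := exists_iterate_forall_iterate_le hper
  set p := f^[i] x
  replace hmin (j : ℕ) : p ≤ f^[j] p := by
    rw [← iterate_add_apply]
    exact hmin _
  have hp₂ : f (f p) ≠ p :=
    fun h => hx₂ (isPeriodicPt_of_mem_periodicPts_of_isPeriodicPt_iterate hper h)
  have hpI : p ∈ I := hmaps.iterate i hx
  obtain ⟨k, hk⟩ : ∃ k, f^[k + 1] p = p := by
    obtain ⟨n, hn, hxn⟩ := hper
    obtain ⟨k, rfl⟩ := Nat.exists_eq_add_one.2 hn
    exact ⟨k, hxn.apply_iterate i⟩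
  set s := f^[k] p with hs
  have hsI : s ∈ I := hmaps.iterate k hpI
  have hsp : f s = p := by rw [hs, ← iterate_succ_apply' f, hk]
  have hps : f p ≠ s := fun h => hp₂ (h ▸ hsp)
  obtain ⟨j, hjs, hsj⟩ := exists_iterate_le_and_le_apply_iterate hk (hmin k)
  have hsub : Icc (f^[j] p) s ⊆ I := ‹I.OrdConnected›.out (hmaps.iterate j hpI) hsI
  obtain ⟨u, hu, hus⟩ := intermediate_value_Icc' hjs (hf.mono hsub) ⟨hsp.trans_le (hmin k), hsj⟩
  have hpu : p ≠ u := fun h => hps (h ▸ hus)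
  have hu_ne_s : u ≠ s := fun h => hpu (hsp.symm.trans ((h ▸ hus).trans h.symm))
  refine ⟨u, hsub hu, hus.symm ▸ hu.2.lt_of_ne hu_ne_s, ?_⟩
  rw [hus, hsp]
  exact ((hmin j).trans hu.1).lt_of_ne hpu

end IntermediateValue

lemma eventually_forall_iterate_mem {α : Type*} [PseudoMetricSpace α] {s : Set α} {f : α → α}
    (hf : ContinuousOn f s) (hmaps : MapsTo f s s) {x : α} (hx : x ∈ s) (m : ℕ) {U : Set α}
    (hU : U ∈ 𝓝 (f^[m] x)) :
    ∀ᶠ ε in 𝓝[>] (0 : ℝ), ∀ g : α → α, MapsTo g s s → (∀ t ∈ s, dist (g t) (f t) < ε) →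
      g^[m] x ∈ U := by
  induction m generalizing U with
  | zero => exact .of_forall fun _ _ _ _ => mem_of_mem_nhds hU
  | succ m ih =>
    rw [iterate_succ_apply'] at hU
    obtain ⟨δ, hδ, hball⟩ := Metric.mem_nhds_iff.1 hU
    have hcont : ∀ᶠ z in 𝓝 (f^[m] x), z ∈ s → dist (f z) (f (f^[m] x)) < δ / 2 :=
      eventually_nhdsWithin_iff.1 <|
        (hf _ (hmaps.iterate m hx)).eventually (Metric.ball_mem_nhds _ (half_pos hδ))
    filter_upwards [ih hcont, nhdsWithin_le_nhds (Iio_mem_nhds (half_pos hδ))]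
      with ε hε hεδ g hg hgf
    have hgs : g^[m] x ∈ s := hg.iterate m hx
    rw [iterate_succ_apply']
    apply hball
    calc dist (g (g^[m] x)) (f (f^[m] x))
        ≤ dist (g (g^[m] x)) (f (g^[m] x)) + dist (f (g^[m] x)) (f (f^[m] x)) :=
          dist_triangle _ _ _
      _ < δ / 2 + δ / 2 := add_lt_add ((hgf _ hgs).trans hεδ) (hε g hg hgf hgs)
      _ = δ := add_halves δ

theorem stability_of_power_of_two_periods_general {α : Type*} [ConditionallyCompleteLinearOrder α]
    [DenselyOrdered α] [PseudoMetricSpace α] [OrderTopology α] {a b : α} {f : α → α}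
    (hcont : ContinuousOn f (Icc a b)) (hmaps : MapsTo f (Icc a b) (Icc a b)) (k : ℕ) {x : α}
    (hx : x ∈ Icc a b) (hper : x ∈ periodicPts f) (hxk : ¬IsPeriodicPt f (2 ^ (k + 1)) x) :
    ∃ ε > (0 : ℝ), ∀ g : α → α, ContinuousOn g (Icc a b) → MapsTo g (Icc a b) (Icc a b) →
      (∀ t ∈ Icc a b, dist (g t) (f t) < ε) →
      ∃ y ∈ Icc a b, minimalPeriod g y = 2 ^ (k + 1) := by
  have hper' : x ∈ periodicPts f^[2 ^ k] := hper.imp fun _ h => ⟨h.1, h.2.iterate _⟩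
  have hx₂ : ¬IsPeriodicPt f^[2 ^ k] 2 x := by rwa [IsPeriodicPt, ← iterate_mul, ← pow_succ]
  obtain ⟨u, hu, hup, hdown⟩ := exists_lt_apply_and_apply_apply_lt
    (hcont.iterate hmaps _) (hmaps.iterate _) hx hper' hx₂
  rw [← iterate_add_apply] at hdown
  have hup_near := eventually_forall_iterate_mem hcont hmaps hu _ (Ioi_mem_nhds hup)
  have hdown_near := eventually_forall_iterate_mem hcont hmaps hu _ (Iio_mem_nhds hdown)
  obtain ⟨ε, hgup, hgdown, hε⟩ :=
    (hup_near.and (hdown_near.and self_mem_nhdsWithin)).exists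
  refine ⟨ε, hε, fun g hgcont hg hgf => ?_⟩
  obtain ⟨y, hy, hy₂⟩ := exists_minimalPeriod_eq_two (hgcont.iterate hg _) (hg.iterate _) hu
    (hgup g hg hgf).le (iterate_add_apply g _ _ u ▸ hgdown g hg hgf)
  exact ⟨y, hy, minimalPeriod_eq_prime_pow_succ_of_iterate hy₂⟩

theorem stability_of_power_of_two_periods (a b : ℝ) (hab : a ≤ b) (f : ℝ → ℝ)
    (hcont : ContinuousOn f (Set.Icc a b))
    (hmaps : Set.MapsTo f (Set.Icc a b) (Set.Icc a b))
    (n : ℕ) (hn : 2 ≤ n)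
    (x : ℝ) (hx : x ∈ Set.Icc a b) (hper : PeriodPt f (2 ^ n) x) :
    ∃ ε > (0:ℝ), ∀ g : ℝ → ℝ, ContinuousOn g (Set.Icc a b) →
      Set.MapsTo g (Set.Icc a b) (Set.Icc a b) →
      (∀ t ∈ Set.Icc a b, |g t - f t| < ε) →
      ∃ y ∈ Set.Icc a b, PeriodPt g (2 ^ (n - 1)) y := by
  obtain ⟨k, rfl⟩ := Nat.exists_eq_add_of_le' hn
  obtain ⟨ε, hε, hstable⟩ := stability_of_power_of_two_periods_general hcont hmaps k hx
    ⟨2 ^ (k + 2), by positivity, hper.1⟩ (hper.2 _ (by positivity) (by gcongr <;> omega))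
  refine ⟨ε, hε, fun g hgcont hg hgf => ?_⟩
  obtain ⟨y, hy, hyk⟩ := hstable g hgcont hg hgf
  exact ⟨y, hy, hyk ▸ periodPt_minimalPeriod g y⟩
end

section
/- Let P be a period-m orbit of f with m ≥ 3. Then there exists a point v ∈ I (not necessarily in P) such that min P ≤ f^2(v) < v < f(v) and f(v) ∈ P. -/
/-!
Let `c` be the least point of the orbit and `d` its predecessor on the orbit, so `f d = c < d`.
The orbit of `c` starts below `d` and reaches `d`, hence some orbit point `q < d` has `d ≤ f q`.
By the intermediate value theorem `f v = d` for some `v ∈ [q, d)`, and then `f (f v) = c ≤ v`.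
Equality would make `c` a point of period at most two.
-/

open Set Function

section PeriodicOrbit

variable {α : Type*} {f : α → α} {x : α}

theorem range_iterate_eq_image_Iio {m : ℕ} (hm : 0 < m) (hx : IsPeriodicPt f m x) :
    range (f^[·] x) = (f^[·] x) '' Iio m := by
  refine (range_subset_iff.2 fun n => ?_).antisymm (image_subset_range _ _)
  exact ⟨n % m, Nat.mod_lt n hm, hx.iterate_mod_apply n⟩

theorem exists_isLeast_range_iterate [LinearOrder α] (hx : x ∈ periodicPts f) :
    ∃ n, IsLeast (range (f^[·] x)) (f^[n] x) := by
  obtain ⟨m, hm, hmx⟩ := hx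
  have hfinite : (range (f^[·] x)).Finite := by
    rw [range_iterate_eq_image_Iio hm hmx]
    exact (finite_Iio m).image _
  obtain ⟨_, ⟨n, rfl⟩, hmin⟩ := exists_min_image _ id hfinite (range_nonempty _)
  exact ⟨n, mem_range_self n, hmin⟩

end PeriodicOrbit

section IntermediateValue

variable {α : Type*} [ConditionallyCompleteLinearOrder α] [TopologicalSpace α] [OrderTopology α]
  [DenselyOrdered α] {f : α → α} {s : Set α}

theorem exists_iterate_two_eq_and_lt_map_of_forall_le_iterate (hs : s.OrdConnected)
    (hf : ContinuousOn f s) {c : α} (hperiod : 3 ≤ minimalPeriod f c)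
    (horbit : ∀ n, f^[n] c ∈ s) (hc : ∀ n, c ≤ f^[n] c) :
    ∃ v ∈ s, f^[2] v = c ∧ c < v ∧ v < f v ∧ f v ∈ range (f^[·] c) := by
  have hfc : f c ≠ c := not_isPeriodicPt_of_pos_of_lt_minimalPeriod one_ne_zero (by lia)
  have hf2c : f^[2] c ≠ c := not_isPeriodicPt_of_pos_of_lt_minimalPeriod two_ne_zero (by lia)
  obtain ⟨p, hp⟩ : ∃ p, minimalPeriod f c = p + 1 := ⟨_, (Nat.sub_add_cancel (by lia)).symm⟩
  obtain ⟨d, hd⟩ : ∃ d, f^[p] c = d := ⟨_, rfl⟩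
  have hfd : f d = c := by
    rw [← hd, ← iterate_succ_apply' f, ← Nat.add_one, ← hp, iterate_minimalPeriod]
  have hcd : c < d := (hd ▸ hc p).lt_of_ne fun h => hfc (h ▸ hfd)
  obtain ⟨k, hqd, hdq⟩ : ∃ k, ¬ d ≤ f^[k] c ∧ d ≤ f^[k + 1] c :=
    Nat.exists_not_and_succ_of_not_zero_of_exists hcd.not_ge ⟨p, hd.ge⟩
  rw [not_le] at hqd
  rw [iterate_succ_apply'] at hdq
  have hsub : Icc (f^[k] c) d ⊆ s := hs.out (horbit k) (hd ▸ horbit p)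
  obtain ⟨v, hv, hfv⟩ := intermediate_value_Ico' hqd.le (hf.mono hsub)
    ⟨hfd.trans_lt hcd, hdq⟩
  have hf2v : f^[2] v = c := (congrArg f hfv).trans hfd
  refine ⟨v, hsub (Ico_subset_Icc_self hv), hf2v, ?_, hv.2.trans_eq hfv.symm, p, hd.trans hfv.symm⟩
  exact ((hc k).trans hv.1).lt_of_ne fun h => hf2c (by rwa [← h] at hf2v)

theorem exists_point_below_its_image_general (hs : s.OrdConnected) (hf : ContinuousOn f s)
    {x : α} (hperiod : 3 ≤ minimalPeriod f x) (horbit : ∀ n, f^[n] x ∈ s) :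
    ∃ v ∈ s, IsLeast (range (f^[·] x)) (f^[2] v) ∧ f^[2] v < v ∧ v < f v ∧
      f v ∈ range (f^[·] x) := by
  have hx : x ∈ periodicPts f := minimalPeriod_pos_iff_mem_periodicPts.1 (by lia)
  obtain ⟨n, hleast⟩ := exists_isLeast_range_iterate hx
  have hshift (k : ℕ) : f^[k] (f^[n] x) = f^[k + n] x := (iterate_add_apply f k n x).symm
  obtain ⟨v, hvs, hf2v, hlt, hvfv, k, hk⟩ :=
    exists_iterate_two_eq_and_lt_map_of_forall_le_iterate hs hf (c := f^[n] x)
      (by rwa [minimalPeriod_apply_iterate hx])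
      (fun k => hshift k ▸ horbit (k + n))
      (fun k => hshift k ▸ hleast.2 (mem_range_self (k + n)))
  exact ⟨v, hvs, hf2v ▸ hleast, hf2v ▸ hlt, hvfv, k + n, (hshift k).symm.trans hk⟩

end IntermediateValue

theorem PeriodPt.minimalPeriod_eq {f : ℝ → ℝ} {m : ℕ} {x : ℝ} (hx : PeriodPt f m x)
    (hm : 0 < m) : minimalPeriod f x = m := by
  have hmx : IsPeriodicPt f m x := hx.1
  refine (hmx.minimalPeriod_le hm).antisymm (not_lt.1 fun hlt => ?_)
  exact hx.2 _ (hmx.minimalPeriod_pos hm) hlt iterate_minimalPeriod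

theorem exists_point_below_its_image (a b : ℝ) (hab : a ≤ b) (f : ℝ → ℝ)
    (hcont : ContinuousOn f (Set.Icc a b))
    (hmaps : Set.MapsTo f (Set.Icc a b) (Set.Icc a b))
    (m : ℕ) (hm : 3 ≤ m)
    (x : ℝ) (hx : x ∈ Set.Icc a b) (hper : PeriodPt f m x)
    (P : Set ℝ) (hP : P = {y | ∃ i < m, y = f^[i] x}) :
    ∃ v ∈ Set.Icc a b, sInf P ≤ f^[2] v ∧ f^[2] v < v ∧ v < f v ∧ f v ∈ P := by
  have hm_pos : 0 < m := by lia
  have hP_range : P = range (f^[·] x) := by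
    rw [hP, range_iterate_eq_image_Iio hm_pos hper.1]
    simp only [image, mem_Iio, eq_comm]
  obtain ⟨v, hv, hleast, hlt, hvfv, hmem⟩ := exists_point_below_its_image_general ordConnected_Icc
    hcont (hm.trans_eq (hper.minimalPeriod_eq hm_pos).symm) fun n => hmaps.iterate n hx
  rw [hP_range]
  exact ⟨v, hv, hleast.csInf_eq.le, hlt, hvfv, hmem⟩
end
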